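/- arXiv:2004.13978 — 11 statements merged into one kernel-verified Lean document; each statement's English description precedes it below -/
import Mathlib

section
/- Let {Y_i}_{i∈V} together with I be a feasible SDP solution for the Densest k-Subgraph relaxation, let T ⊆ V be nonempty, and let ε ∈ [0,1] be such that (1/|T|) Σ_{i∈T} ‖Y_i‖² ≥ 1 − ε. Then (1/|T|²) Σ_{i∈T} Σ_{j∈T} ⟨Y_i, Y_j⟩ ≥ 1 − 4ε. -/
open RealInnerProductSpace Finset

theorem stmt_0 {n m : ℕ} (hn : 1 ≤ n) (k : ℝ) (hk : 0 < k)
    (Y : Fin n → EuclideanSpace ℝ (Fin m)) (I : EuclideanSpace ℝ (Fin m))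
    (hsum : ∑ i, ‖Y i‖ ^ 2 = k)
    (hrow : ∀ i, ∑ j, ⟪Y i, Y j⟫ ≤ k * ‖Y i‖ ^ 2)
    (hnn : ∀ i j, 0 ≤ ⟪Y i, Y j⟫)
    (hle1 : ∀ i j, ⟪Y i, Y j⟫ ≤ ‖Y i‖ ^ 2)
    (hle2 : ∀ i j, ⟪Y i, Y j⟫ ≤ ‖Y j‖ ^ 2)
    (hnorm1 : ∀ i, ‖Y i‖ ^ 2 ≤ 1)
    (hYI : ∀ i, ⟪Y i, I⟫ = ‖Y i‖ ^ 2)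
    (hInorm : ‖I‖ = 1)
    (T : Finset (Fin n)) (hT : T.Nonempty)
    (ε : ℝ) (hε0 : 0 ≤ ε) (hε1 : ε ≤ 1)
    (havg : 1 - ε ≤ (1 / (T.card : ℝ)) * ∑ i ∈ T, ‖Y i‖ ^ 2) :
    1 - 4 * ε ≤ (1 / (T.card : ℝ) ^ 2) * ∑ i ∈ T, ∑ j ∈ T, ⟪Y i, Y j⟫ := by
  have ht : (0 : ℝ) < T.card := by exact_mod_cast hT.card_pos
  have h1 : ∑ i ∈ T, ‖Y i‖ ^ 2 = ⟪∑ i ∈ T, Y i, I⟫ := by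
    rw [sum_inner]
    exact Finset.sum_congr rfl fun i _ => (hYI i).symm
  have h2 : ∑ i ∈ T, ∑ j ∈ T, ⟪Y i, Y j⟫ = ‖∑ i ∈ T, Y i‖ ^ 2 := by
    rw [← real_inner_self_eq_norm_sq, sum_inner]
    exact Finset.sum_congr rfl fun i _ => (inner_sum _ _ _).symm
  have h3 := real_inner_le_norm (∑ i ∈ T, Y i) I
  rw [hInorm, mul_one, ← h1] at h3
  have h4 : (1 - ε) * T.card ≤ ∑ i ∈ T, ‖Y i‖ ^ 2 := by
    rw [one_div, inv_mul_eq_div, le_div_iff₀ ht] at havg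
    exact havg
  have h5 : ((1 - ε) * T.card) ^ 2 ≤ ‖∑ i ∈ T, Y i‖ ^ 2 :=
    pow_le_pow_left₀ (mul_nonneg (by linarith) ht.le) (h4.trans h3) 2
  rw [h2, one_div, inv_mul_eq_div, le_div_iff₀ (by positivity)]
  refine le_trans ?_ h5
  rw [mul_pow]
  exact mul_le_mul_of_nonneg_right (by nlinarith [sq_nonneg ε]) (by positivity)
end

section
/- Let {X_i}_{i∈V} together with I be a feasible SDP solution for the Densest k-Subgraph relaxation, where k is a positive integer, and let S ⊆ V with |S| = k. Then (1/k²) Σ_{i∈S} Σ_{j∈S} ⟨X_i, X_j⟩ ≥ 4·(1/k) Σ_{i∈S} ‖X_i‖² − 3. -/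
open RealInnerProductSpace Finset

theorem stmt_1 {n m : ℕ} (hn : 1 ≤ n) (k : ℕ) (hk : 0 < k)
    (X : Fin n → EuclideanSpace ℝ (Fin m)) (I : EuclideanSpace ℝ (Fin m))
    (hsum : ∑ i, ‖X i‖ ^ 2 = (k : ℝ))
    (hrow : ∀ i, ∑ j, ⟪X i, X j⟫ ≤ (k : ℝ) * ‖X i‖ ^ 2)
    (hnn : ∀ i j, 0 ≤ ⟪X i, X j⟫)
    (hle1 : ∀ i j, ⟪X i, X j⟫ ≤ ‖X i‖ ^ 2)
    (hle2 : ∀ i j, ⟪X i, X j⟫ ≤ ‖X j‖ ^ 2)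
    (hnorm1 : ∀ i, ‖X i‖ ^ 2 ≤ 1)
    (hXI : ∀ i, ⟪X i, I⟫ = ‖X i‖ ^ 2)
    (hInorm : ‖I‖ = 1)
    (S : Finset (Fin n)) (hS : S.card = k) :
    4 * ((1 / (k : ℝ)) * ∑ i ∈ S, ‖X i‖ ^ 2) - 3 ≤
      (1 / (k : ℝ) ^ 2) * ∑ i ∈ S, ∑ j ∈ S, ⟪X i, X j⟫ := by
  have hk' : (0 : ℝ) < k := by exact_mod_cast hk
  set T : ℝ := ∑ i ∈ S, ‖X i‖ ^ 2 with hT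
  have hTk : T ≤ k := by
    rw [← hsum]
    exact Finset.sum_le_sum_of_subset_of_nonneg (Finset.subset_univ S)
      (fun i _ _ => by positivity)
  have hYI : ⟪∑ i ∈ S, X i, I⟫ = T := by
    rw [sum_inner]
    exact Finset.sum_congr rfl (fun i _ => hXI i)
  have hYY : ∑ i ∈ S, ∑ j ∈ S, ⟪X i, X j⟫ = ‖∑ i ∈ S, X i‖ ^ 2 := by
    rw [← real_inner_self_eq_norm_sq, sum_inner]
    exact Finset.sum_congr rfl (fun i _ => (inner_sum _ _ _).symm)
  have hcs : T ≤ ‖∑ i ∈ S, X i‖ := by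
    have h := real_inner_le_norm (∑ i ∈ S, X i) I
    rwa [hYI, hInorm, mul_one] at h
  have hT0 : 0 ≤ T := Finset.sum_nonneg (fun i _ => by positivity)
  have hsq : T ^ 2 ≤ ‖∑ i ∈ S, X i‖ ^ 2 := pow_le_pow_left₀ hT0 hcs 2
  rw [hYY]
  have h1 : (1 / (k : ℝ)) * T ≤ 1 := by
    rw [one_div_mul_eq_div]
    exact (div_le_one hk').2 hTk
  have h2 : (1 / (k : ℝ) ^ 2) * T ^ 2 ≤ (1 / (k : ℝ) ^ 2) * ‖∑ i ∈ S, X i‖ ^ 2 := by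
    gcongr
  have h3 : (1 / (k : ℝ) ^ 2) * T ^ 2 = ((1 / (k : ℝ)) * T) ^ 2 := by ring
  nlinarith [h1, h2, h3]
end

section
/- Let {X_i}_{i∈V} together with I be a feasible SDP solution for the Densest k-Subgraph relaxation, where k is a positive integer, and let S ⊆ V with |S| = k. Then Σ_{i∈S} Σ_{j∈V∖S} ⟨X_i, X_j⟩ ≤ 3k²·(1 − (1/k) Σ_{i∈S} ‖X_i‖²). -/
open RealInnerProductSpace Finset

theorem stmt_2 {n m : ℕ} (hn : 1 ≤ n) (k : ℕ) (hk : 0 < k)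
    (X : Fin n → EuclideanSpace ℝ (Fin m)) (I : EuclideanSpace ℝ (Fin m))
    (hsum : ∑ i, ‖X i‖ ^ 2 = (k : ℝ))
    (hrow : ∀ i, ∑ j, ⟪X i, X j⟫ ≤ (k : ℝ) * ‖X i‖ ^ 2)
    (hnn : ∀ i j, 0 ≤ ⟪X i, X j⟫)
    (hle1 : ∀ i j, ⟪X i, X j⟫ ≤ ‖X i‖ ^ 2)
    (hle2 : ∀ i j, ⟪X i, X j⟫ ≤ ‖X j‖ ^ 2)
    (hnorm1 : ∀ i, ‖X i‖ ^ 2 ≤ 1)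
    (hXI : ∀ i, ⟪X i, I⟫ = ‖X i‖ ^ 2)
    (hInorm : ‖I‖ = 1)
    (S : Finset (Fin n)) (hS : S.card = k) :
    ∑ i ∈ S, ∑ j ∈ Sᶜ, ⟪X i, X j⟫ ≤
      3 * (k : ℝ) ^ 2 * (1 - (1 / (k : ℝ)) * ∑ i ∈ S, ‖X i‖ ^ 2) := by
  have hk' : (0 : ℝ) < k := by exact_mod_cast hk
  have hsplit : ∑ i ∈ S, ‖X i‖ ^ 2 + ∑ j ∈ Sᶜ, ‖X j‖ ^ 2 = (k : ℝ) := by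
    rw [Finset.sum_add_sum_compl, hsum]
  have hT : 0 ≤ ∑ j ∈ Sᶜ, ‖X j‖ ^ 2 := Finset.sum_nonneg fun j _ => sq_nonneg _
  have h1 : ∑ i ∈ S, ∑ j ∈ Sᶜ, ⟪X i, X j⟫ ≤ ∑ i ∈ S, ∑ j ∈ Sᶜ, ‖X j‖ ^ 2 :=
    Finset.sum_le_sum fun i _ => Finset.sum_le_sum fun j _ => hle2 i j
  rw [Finset.sum_const, hS, nsmul_eq_mul] at h1
  have h2 : 3 * (k : ℝ) ^ 2 * (1 - (1 / (k : ℝ)) * ∑ i ∈ S, ‖X i‖ ^ 2)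
      = 3 * (k * ∑ j ∈ Sᶜ, ‖X j‖ ^ 2) := by
    rw [eq_sub_of_add_eq' hsplit]
    field_simp
  have h3 := mul_nonneg hk'.le hT
  rw [h2]
  linarith
end

section
/- Let {X_i}_{i∈V} together with I be a feasible SDP solution for the Densest k-Subgraph relaxation, where k is a positive integer, and let S ⊆ V with |S| = k. Let B be a symmetric n×n real matrix such that B_{ij} = 0 whenever both i, j ∈ S or both i, j ∈ V∖S, and let ‖B‖ denote its spectral norm (operator 2-norm). Setting μ := (1/k) Σ_{i∈S} ‖X_i‖², one has Σ_{i∈V} Σ_{j∈V} B_{ij} ⟨X_i, X_j⟩ ≤ 2k‖B‖·√(μ(1 − μ)). -/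
open RealInnerProductSpace Finset

theorem stmt_3 {n m : ℕ} (hn : 1 ≤ n) (k : ℕ) (hk : 0 < k)
    (X : Fin n → EuclideanSpace ℝ (Fin m)) (I : EuclideanSpace ℝ (Fin m))
    (hsum : ∑ i, ‖X i‖ ^ 2 = (k : ℝ))
    (hrow : ∀ i, ∑ j, ⟪X i, X j⟫ ≤ (k : ℝ) * ‖X i‖ ^ 2)
    (hnn : ∀ i j, 0 ≤ ⟪X i, X j⟫)
    (hle1 : ∀ i j, ⟪X i, X j⟫ ≤ ‖X i‖ ^ 2)
    (hle2 : ∀ i j, ⟪X i, X j⟫ ≤ ‖X j‖ ^ 2)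
    (hnorm1 : ∀ i, ‖X i‖ ^ 2 ≤ 1)
    (hXI : ∀ i, ⟪X i, I⟫ = ‖X i‖ ^ 2)
    (hInorm : ‖I‖ = 1)
    (S : Finset (Fin n)) (hS : S.card = k)
    (B : Matrix (Fin n) (Fin n) ℝ) (hBsymm : B.IsSymm)
    (hBzero : ∀ i j, ((i ∈ S ∧ j ∈ S) ∨ (i ∉ S ∧ j ∉ S)) → B i j = 0) :
    ∑ i, ∑ j, B i j * ⟪X i, X j⟫ ≤
      2 * (k : ℝ) * ‖Matrix.toEuclideanCLM (𝕜 := ℝ) B‖ *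
        Real.sqrt (((1 / (k : ℝ)) * ∑ i ∈ S, ‖X i‖ ^ 2) *
          (1 - (1 / (k : ℝ)) * ∑ i ∈ S, ‖X i‖ ^ 2)) := by
  classical
  set T := Matrix.toEuclideanCLM (𝕜 := ℝ) B with hT
  let u : Fin m → EuclideanSpace ℝ (Fin n) :=
    fun c => WithLp.toLp 2 (fun i => if i ∈ S then X i c else 0)
  let v : Fin m → EuclideanSpace ℝ (Fin n) :=
    fun c => WithLp.toLp 2 (fun i => if i ∈ S then 0 else X i c)
  have hu : ∀ c i, u c i = if i ∈ S then X i c else 0 := fun c i => rfl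
  have hv : ∀ c i, v c i = if i ∈ S then 0 else X i c := fun c i => rfl
  have hin : ∀ c, ⟪u c, T (v c)⟫ = ∑ i, ∑ j, B i j * (u c i * v c j) := by
    intro c
    have h1 : ∀ i, (T (v c)) i = ∑ j, B i j * v c j := by
      intro i
      rfl
    rw [PiLp.inner_apply]
    refine Finset.sum_congr rfl fun i _ => ?_
    rw [h1, RCLike.inner_apply, conj_trivial, Finset.sum_mul]
    refine Finset.sum_congr rfl fun j _ => ?_
    ring
  have hX : ∀ i j, ⟪X i, X j⟫ = ∑ c, X i c * X j c := by
    intro i j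
    rw [PiLp.inner_apply]
    refine Finset.sum_congr rfl fun c _ => ?_
    rw [RCLike.inner_apply, conj_trivial, mul_comm]
  have hXn : ∀ i, ‖X i‖ ^ 2 = ∑ c, X i c ^ 2 := by
    intro i
    rw [EuclideanSpace.real_norm_sq_eq]
  have key : ∑ i, ∑ j, B i j * ⟪X i, X j⟫ = 2 * ∑ c, ⟪u c, T (v c)⟫ := by
    have h2 : ∀ c, ∑ i, ∑ j, B i j * (X i c * X j c) = 2 * ⟪u c, T (v c)⟫ := by
      intro c
      have h3 : ∑ i, ∑ j, B i j * (v c i * u c j) = ∑ i, ∑ j, B i j * (u c i * v c j) := by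
        rw [Finset.sum_comm]
        refine Finset.sum_congr rfl fun i _ => Finset.sum_congr rfl fun j _ => ?_
        rw [hBsymm.apply i j]
        ring
      rw [hin, two_mul]
      nth_rewrite 2 [← h3]
      rw [← Finset.sum_add_distrib]
      refine Finset.sum_congr rfl fun i _ => ?_
      rw [← Finset.sum_add_distrib]
      refine Finset.sum_congr rfl fun j _ => ?_
      have hz := hBzero i j
      rw [hu, hu, hv, hv]
      by_cases hi : i ∈ S <;> by_cases hj : j ∈ S <;> simp [hi, hj] at hz ⊢ <;> simp [hz]
    rw [Finset.mul_sum, ← Finset.sum_congr rfl fun c _ => h2 c, Finset.sum_comm]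
    rw [Finset.sum_comm]
    conv_rhs => rw [Finset.sum_comm]
    refine Finset.sum_congr rfl fun i _ => ?_
    conv_rhs => rw [Finset.sum_comm]
    refine Finset.sum_congr rfl fun j _ => ?_
    rw [hX, Finset.mul_sum]
  have hsu : ∑ c, ‖u c‖ ^ 2 = ∑ i ∈ S, ‖X i‖ ^ 2 := by
    simp_rw [EuclideanSpace.real_norm_sq_eq]
    rw [Finset.sum_comm, ← Finset.sum_subset (Finset.subset_univ S)]
    · refine Finset.sum_congr rfl fun i hi => Finset.sum_congr rfl fun c _ => ?_
      rw [hu, if_pos hi]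
    · intro i _ hi
      refine Finset.sum_eq_zero fun c _ => ?_
      rw [hu, if_neg hi]
      norm_num
  have hsv : ∑ c, ‖v c‖ ^ 2 = k - ∑ i ∈ S, ‖X i‖ ^ 2 := by
    rw [← hsu, eq_sub_iff_add_eq, ← hsum]
    simp_rw [EuclideanSpace.real_norm_sq_eq]
    rw [Finset.sum_comm (s := univ) (t := univ) (f := fun c i => v c i ^ 2),
      Finset.sum_comm (s := univ) (t := univ) (f := fun c i => u c i ^ 2),
      ← Finset.sum_add_distrib]
    refine Finset.sum_congr rfl fun i _ => ?_
    rw [← Finset.sum_add_distrib]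
    refine Finset.sum_congr rfl fun c _ => ?_
    rw [hu, hv]
    by_cases hi : i ∈ S <;> simp [hi]
  have hbound : ∑ c, ⟪u c, T (v c)⟫ ≤ ‖T‖ * ∑ c, ‖u c‖ * ‖v c‖ := by
    rw [Finset.mul_sum]
    refine Finset.sum_le_sum fun c _ => ?_
    calc ⟪u c, T (v c)⟫ ≤ ‖u c‖ * ‖T (v c)‖ := real_inner_le_norm _ _
      _ ≤ ‖u c‖ * (‖T‖ * ‖v c‖) := by gcongr; exact T.le_opNorm _
      _ = _ := by ring
  have hcs := Real.sum_mul_le_sqrt_mul_sqrt univ (fun c => ‖u c‖) (fun c => ‖v c‖)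
  rw [hsu, hsv] at hcs
  set a := ∑ i ∈ S, ‖X i‖ ^ 2 with ha
  have ha0 : 0 ≤ a := Finset.sum_nonneg fun i _ => by positivity
  have hk' : (0 : ℝ) < k := by exact_mod_cast hk
  have hfin : (k : ℝ) * Real.sqrt ((1 / (k : ℝ) * a) * (1 - 1 / (k : ℝ) * a))
      = Real.sqrt a * Real.sqrt (k - a) := by
    rw [← Real.sqrt_mul ha0]
    have : a * (k - a) = (k : ℝ) ^ 2 * ((1 / (k : ℝ) * a) * (1 - 1 / (k : ℝ) * a)) := by
      field_simp
    rw [this, Real.sqrt_mul (sq_nonneg (k : ℝ)), Real.sqrt_sq hk'.le]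
  rw [key]
  have h5 := mul_le_mul_of_nonneg_left hcs (norm_nonneg T)
  rw [← hfin] at h5
  have h6 := hbound.trans h5
  clear_value T u v a
  calc _ ≤ _ := mul_le_mul_of_nonneg_left h6 (zero_le_two)
    _ = _ := by ring
end

section
/- Let {X_i}_{i∈V} together with I be a feasible SDP solution for the Densest k-Subgraph relaxation, where k is a positive integer, and let S ⊆ V with |S| = k. Let p ≥ 0 and β ≥ 0, and let B be the symmetric n×n matrix with B_{ij} = A_{ij} − p whenever exactly one of i, j lies in S, and B_{ij} = 0 otherwise. If the spectral norm of B satisfies ‖B‖ ≤ β, then, setting μ := (1/k) Σ_{i∈S} ‖X_i‖², one has Σ_{i∈S} Σ_{j∈V∖S} A_{ij} ⟨X_i, X_j⟩ ≤ 3pk²(1 − μ) + kβ·√(μ(1 − μ)). -/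
open RealInnerProductSpace Finset

theorem bilin_le {n : ℕ} (B : Matrix (Fin n) (Fin n) ℝ) (β : ℝ)
    (hBnorm : ‖Matrix.toEuclideanCLM (𝕜 := ℝ) B‖ ≤ β) (u v : Fin n → ℝ) :
    ∑ i, ∑ j, B i j * (u i * v j) ≤
      β * (Real.sqrt (∑ i, u i ^ 2) * Real.sqrt (∑ i, v i ^ 2)) := by
  have h1 : ∑ i, ∑ j, B i j * (u i * v j) =
      ⟪WithLp.toLp 2 u, Matrix.toEuclideanCLM (𝕜 := ℝ) B (WithLp.toLp 2 v)⟫ := by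
    rw [PiLp.inner_apply]
    refine Finset.sum_congr rfl fun i _ => ?_
    simp only [Matrix.toEuclideanCLM_toLp, Matrix.mulVec, dotProduct, RCLike.inner_apply,
      conj_trivial, Finset.sum_mul]
    exact Finset.sum_congr rfl fun j _ => by ring
  have hn : ∀ w : Fin n → ℝ, ‖WithLp.toLp 2 w‖ = Real.sqrt (∑ i, w i ^ 2) := by
    intro w
    rw [EuclideanSpace.norm_eq]
    simp
  rw [h1, ← hn, ← hn]
  calc _ ≤ ‖WithLp.toLp 2 u‖ * ‖Matrix.toEuclideanCLM (𝕜 := ℝ) B (WithLp.toLp 2 v)‖ :=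
        real_inner_le_norm _ _
    _ ≤ ‖WithLp.toLp 2 u‖ * (β * ‖WithLp.toLp 2 v‖) := by
        gcongr
        exact ContinuousLinearMap.le_of_opNorm_le _ hBnorm _
    _ = _ := by ring

theorem stmt_4 {n m : ℕ} (hn : 1 ≤ n) (k : ℕ) (hk : 0 < k)
    (A : Matrix (Fin n) (Fin n) ℝ) (hAsymm : A.IsSymm) (hAnn : ∀ i j, 0 ≤ A i j)
    (X : Fin n → EuclideanSpace ℝ (Fin m)) (I : EuclideanSpace ℝ (Fin m))
    (hsum : ∑ i, ‖X i‖ ^ 2 = (k : ℝ))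
    (hrow : ∀ i, ∑ j, ⟪X i, X j⟫ ≤ (k : ℝ) * ‖X i‖ ^ 2)
    (hnn : ∀ i j, 0 ≤ ⟪X i, X j⟫)
    (hle1 : ∀ i j, ⟪X i, X j⟫ ≤ ‖X i‖ ^ 2)
    (hle2 : ∀ i j, ⟪X i, X j⟫ ≤ ‖X j‖ ^ 2)
    (hnorm1 : ∀ i, ‖X i‖ ^ 2 ≤ 1)
    (hXI : ∀ i, ⟪X i, I⟫ = ‖X i‖ ^ 2)
    (hInorm : ‖I‖ = 1)
    (S : Finset (Fin n)) (hS : S.card = k)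
    (p β : ℝ) (hp : 0 ≤ p) (hβ : 0 ≤ β)
    (B : Matrix (Fin n) (Fin n) ℝ)
    (hB : ∀ i j, B i j = if ((i ∈ S) ↔ (j ∈ S)) then 0 else A i j - p)
    (hBnorm : ‖Matrix.toEuclideanCLM (𝕜 := ℝ) B‖ ≤ β) :
    ∑ i ∈ S, ∑ j ∈ Sᶜ, A i j * ⟪X i, X j⟫ ≤
      3 * p * (k : ℝ) ^ 2 * (1 - (1 / (k : ℝ)) * ∑ i ∈ S, ‖X i‖ ^ 2) +
        (k : ℝ) * β * Real.sqrt (((1 / (k : ℝ)) * ∑ i ∈ S, ‖X i‖ ^ 2) *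
          (1 - (1 / (k : ℝ)) * ∑ i ∈ S, ‖X i‖ ^ 2)) := by
  have hk' : (0 : ℝ) < k := by exact_mod_cast hk
  have hsplit : ∑ i ∈ S, ‖X i‖ ^ 2 + ∑ i ∈ Sᶜ, ‖X i‖ ^ 2 = (k : ℝ) := by
    rw [Finset.sum_add_sum_compl, hsum]
  set a := ∑ i ∈ S, ‖X i‖ ^ 2 with ha
  set b := ∑ i ∈ Sᶜ, ‖X i‖ ^ 2 with hb
  have ha0 : 0 ≤ a := Finset.sum_nonneg fun i _ => by positivity
  have hb0 : 0 ≤ b := Finset.sum_nonneg fun i _ => by positivity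
  have hmu : 1 - 1 / (k : ℝ) * a = b / k := by
    field_simp
    linarith
  have hP : ∑ i ∈ S, ∑ j ∈ Sᶜ, ⟪X i, X j⟫ ≤ k * b := by
    calc _ ≤ ∑ i ∈ S, ∑ j ∈ Sᶜ, ‖X j‖ ^ 2 :=
          Finset.sum_le_sum fun i _ => Finset.sum_le_sum fun j _ => hle2 i j
      _ = k * b := by rw [Finset.sum_const, hS, nsmul_eq_mul]
  let u : Fin m → Fin n → ℝ := fun c i => if i ∈ S then X i c else 0
  let v : Fin m → Fin n → ℝ := fun c i => if i ∈ S then 0 else X i c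
  have hinner : ∀ i j, ⟪X i, X j⟫ = ∑ c, X i c * X j c := by
    intro i j
    rw [PiLp.inner_apply]
    exact Finset.sum_congr rfl fun c _ => by simp [mul_comm]
  have hu : ∑ c, ∑ i, u c i ^ 2 = a := by
    rw [Finset.sum_comm, ha, ← Finset.sum_subset (Finset.subset_univ S)]
    · refine Finset.sum_congr rfl fun i hi => ?_
      rw [EuclideanSpace.norm_sq_eq]
      simp [u, hi]
    · intro i _ hi
      simp [u, hi]
  have hv : ∑ c, ∑ i, v c i ^ 2 = b := by
    rw [Finset.sum_comm, hb, ← Finset.sum_subset (Finset.subset_univ Sᶜ)]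
    · refine Finset.sum_congr rfl fun i hi => ?_
      rw [Finset.mem_compl] at hi
      rw [EuclideanSpace.norm_sq_eq]
      simp [v, hi]
    · intro i _ hi
      rw [Finset.mem_compl, not_not] at hi
      simp [v, hi]
  have hBB : ∑ i ∈ S, ∑ j ∈ Sᶜ, (A i j - p) * ⟪X i, X j⟫ =
      ∑ c, ∑ i, ∑ j, B i j * (u c i * v c j) := by
    symm
    rw [Finset.sum_comm, ← Finset.sum_subset (Finset.subset_univ S)]
    · refine Finset.sum_congr rfl fun i hi => ?_
      rw [Finset.sum_comm, ← Finset.sum_subset (Finset.subset_univ Sᶜ)]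
      · refine Finset.sum_congr rfl fun j hj => ?_
        rw [Finset.mem_compl] at hj
        rw [hinner, Finset.mul_sum]
        simp [u, v, hi, hj, hB]
      · intro j _ hj
        rw [Finset.mem_compl, not_not] at hj
        simp [v, hj]
    · intro i _ hi
      simp [u, hi]
  have hBle : ∑ c, ∑ i, ∑ j, B i j * (u c i * v c j) ≤ β * (Real.sqrt a * Real.sqrt b) := by
    calc _ ≤ ∑ c, β * (Real.sqrt (∑ i, u c i ^ 2) * Real.sqrt (∑ i, v c i ^ 2)) :=
          Finset.sum_le_sum fun c _ => bilin_le B β hBnorm (u c) (v c)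
      _ = β * ∑ c, (Real.sqrt (∑ i, u c i ^ 2) * Real.sqrt (∑ i, v c i ^ 2)) := by
          rw [Finset.mul_sum]
      _ ≤ β * (Real.sqrt a * Real.sqrt b) := by
          rw [← hu, ← hv]
          refine mul_le_mul_of_nonneg_left ?_ hβ
          exact Real.sum_sqrt_mul_sqrt_le _ (fun c => Finset.sum_nonneg fun i _ => sq_nonneg _)
            (fun c => Finset.sum_nonneg fun i _ => sq_nonneg _)
  have hdec : ∑ i ∈ S, ∑ j ∈ Sᶜ, A i j * ⟪X i, X j⟫ =
      p * ∑ i ∈ S, ∑ j ∈ Sᶜ, ⟪X i, X j⟫ + ∑ i ∈ S, ∑ j ∈ Sᶜ, (A i j - p) * ⟪X i, X j⟫ := by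
    simp only [Finset.mul_sum, ← Finset.sum_add_distrib]
    exact Finset.sum_congr rfl fun i _ => Finset.sum_congr rfl fun j _ => by ring
  clear_value a b
  have hsq : Real.sqrt (1 / (k : ℝ) * a * (b / k)) = Real.sqrt a * Real.sqrt b / k := by
    rw [← Real.sqrt_mul ha0, show 1 / (k : ℝ) * a * (b / k) = a * b / (k : ℝ) ^ 2 by
      field_simp, Real.sqrt_div (mul_nonneg ha0 hb0), Real.sqrt_sq hk'.le]
  rw [hdec, hBB, hmu, hsq]
  have e1 : 3 * p * (k : ℝ) ^ 2 * (b / k) = 3 * (p * (k * b)) := by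
    field_simp
  have e2 : (k : ℝ) * β * (Real.sqrt a * Real.sqrt b / k) = β * (Real.sqrt a * Real.sqrt b) := by
    field_simp
  rw [e1, e2]
  have h3 := mul_le_mul_of_nonneg_left hP hp
  have h4 : 0 ≤ p * (k * b) := mul_nonneg hp (mul_nonneg hk'.le hb0)
  linarith
end

section
/- Let {X_i}_{i∈V} together with I be a feasible SDP solution for the Densest k-Subgraph relaxation, where k is a positive integer, and let S ⊆ V with |S| = k and k < n. Let d, δ, ξ, λ, d' > 0 be reals and set p := δd/k. Suppose that: (a) Σ_{i∈V} Σ_{j∈V} A_{ij} ⟨X_i, X_j⟩ ≥ kd; (b) Σ_{i∈S} Σ_{j∈V∖S} A_{ij} ⟨X_i, X_j⟩ ≤ 3pk² + (ξ/2)·k·√(np); and (c) Σ_{i∈V∖S} Σ_{j∈V∖S} A_{ij} ⟨X_i, X_j⟩ ≤ λk + d'k²/(n − k). Then Σ_{i∈S} Σ_{j∈S} A_{ij} ⟨X_i, X_j⟩ ≥ (1 − η)·kd, where η := 6δ + ξ√(δn/(dk)) + λ/d + d'k/((n − k)d). -/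
open RealInnerProductSpace Finset

theorem stmt_7 {n m : ℕ} (hn : 1 ≤ n) (k : ℕ) (hk : 0 < k) (hkn : k < n)
    (A : Matrix (Fin n) (Fin n) ℝ) (hAsymm : A.IsSymm) (hAnn : ∀ i j, 0 ≤ A i j)
    (X : Fin n → EuclideanSpace ℝ (Fin m)) (I : EuclideanSpace ℝ (Fin m))
    (hsum : ∑ i, ‖X i‖ ^ 2 = (k : ℝ))
    (hrow : ∀ i, ∑ j, ⟪X i, X j⟫ ≤ (k : ℝ) * ‖X i‖ ^ 2)
    (hnn : ∀ i j, 0 ≤ ⟪X i, X j⟫)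
    (hle1 : ∀ i j, ⟪X i, X j⟫ ≤ ‖X i‖ ^ 2)
    (hle2 : ∀ i j, ⟪X i, X j⟫ ≤ ‖X j‖ ^ 2)
    (hnorm1 : ∀ i, ‖X i‖ ^ 2 ≤ 1)
    (hXI : ∀ i, ⟪X i, I⟫ = ‖X i‖ ^ 2)
    (hInorm : ‖I‖ = 1)
    (S : Finset (Fin n)) (hS : S.card = k)
    (d δ ξ lam d' : ℝ) (hd : 0 < d) (hδ : 0 < δ) (hξ : 0 < ξ) (hlam : 0 < lam) (hd' : 0 < d')
    (p : ℝ) (hp : p = δ * d / k)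
    (ha : (k : ℝ) * d ≤ ∑ i, ∑ j, A i j * ⟪X i, X j⟫)
    (hb : ∑ i ∈ S, ∑ j ∈ Sᶜ, A i j * ⟪X i, X j⟫ ≤
      3 * p * (k : ℝ) ^ 2 + (ξ / 2) * (k : ℝ) * Real.sqrt ((n : ℝ) * p))
    (hc : ∑ i ∈ Sᶜ, ∑ j ∈ Sᶜ, A i j * ⟪X i, X j⟫ ≤
      lam * (k : ℝ) + d' * (k : ℝ) ^ 2 / ((n : ℝ) - (k : ℝ))) :
    (1 - (6 * δ + ξ * Real.sqrt (δ * (n : ℝ) / (d * (k : ℝ))) + lam / d +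
        d' * (k : ℝ) / (((n : ℝ) - (k : ℝ)) * d))) * ((k : ℝ) * d) ≤
      ∑ i ∈ S, ∑ j ∈ S, A i j * ⟪X i, X j⟫ := by
  have hk' : (0 : ℝ) < k := by exact_mod_cast hk
  have hnk : (0 : ℝ) < (n : ℝ) - k := by
    have : (k : ℝ) < n := by exact_mod_cast hkn
    linarith
  have hsqrt : Real.sqrt ((n : ℝ) * p) = d * Real.sqrt (δ * (n : ℝ) / (d * (k : ℝ))) := by
    have h1 : (n : ℝ) * p = d ^ 2 * (δ * (n : ℝ) / (d * (k : ℝ))) := by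
      rw [hp]; field_simp
    rw [h1, Real.sqrt_mul (sq_nonneg d), Real.sqrt_sq hd.le]
  have hpk : p * (k : ℝ) ^ 2 = δ * d * k := by
    rw [hp]; field_simp
  have hsplit : ∑ i, ∑ j, A i j * ⟪X i, X j⟫ =
      (∑ i ∈ S, ∑ j ∈ S, A i j * ⟪X i, X j⟫ + ∑ i ∈ S, ∑ j ∈ Sᶜ, A i j * ⟪X i, X j⟫) +
      (∑ i ∈ Sᶜ, ∑ j ∈ S, A i j * ⟪X i, X j⟫ + ∑ i ∈ Sᶜ, ∑ j ∈ Sᶜ, A i j * ⟪X i, X j⟫) := by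
    rw [← Finset.sum_add_distrib, ← Finset.sum_add_distrib]
    simp only [Finset.sum_add_sum_compl]
  have hsym : ∑ i ∈ Sᶜ, ∑ j ∈ S, A i j * ⟪X i, X j⟫ =
      ∑ i ∈ S, ∑ j ∈ Sᶜ, A i j * ⟪X i, X j⟫ := by
    rw [Finset.sum_comm]
    refine Finset.sum_congr rfl fun i _ => Finset.sum_congr rfl fun j _ => ?_
    rw [real_inner_comm, hAsymm.apply]
  have hl : lam / d * ((k : ℝ) * d) = lam * k := by field_simp
  have hdd : d' * (k : ℝ) / (((n : ℝ) - (k : ℝ)) * d) * ((k : ℝ) * d) =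
      d' * (k : ℝ) ^ 2 / ((n : ℝ) - (k : ℝ)) := by field_simp
  rw [hsqrt] at hb
  rw [hsplit, hsym] at ha
  linear_combination ha + 2 * hb + hc + 6 * hpk - hl - hdd
end

section
/- Let {X_i}_{i∈V} together with I be a feasible SDP solution for the Densest k-Subgraph relaxation, where k is a positive integer, and let S ⊆ V with |S| = k. Let d > 0, η > 0 and α > 1 be reals with Σ_{i∈S} Σ_{j∈S} A_{ij} = kd and Σ_{i∈S} Σ_{j∈S} A_{ij} ⟨X_i, X_j⟩ ≥ (1 − η)·kd. Define T := {i ∈ V : ‖X_i‖² ≥ 1 − αη}. Then ρ(T) ≥ ρ(T ∩ S) ≥ (kd/2)·(1 − 1/α). -/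
open RealInnerProductSpace Finset

theorem stmt_9 {n m : ℕ} (hn : 1 ≤ n) (k : ℕ) (hk : 0 < k)
    (A : Matrix (Fin n) (Fin n) ℝ) (hAsymm : A.IsSymm) (hAnn : ∀ i j, 0 ≤ A i j)
    (X : Fin n → EuclideanSpace ℝ (Fin m)) (I : EuclideanSpace ℝ (Fin m))
    (hsum : ∑ i, ‖X i‖ ^ 2 = (k : ℝ))
    (hrow : ∀ i, ∑ j, ⟪X i, X j⟫ ≤ (k : ℝ) * ‖X i‖ ^ 2)
    (hnn : ∀ i j, 0 ≤ ⟪X i, X j⟫)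
    (hle1 : ∀ i j, ⟪X i, X j⟫ ≤ ‖X i‖ ^ 2)
    (hle2 : ∀ i j, ⟪X i, X j⟫ ≤ ‖X j‖ ^ 2)
    (hnorm1 : ∀ i, ‖X i‖ ^ 2 ≤ 1)
    (hXI : ∀ i, ⟪X i, I⟫ = ‖X i‖ ^ 2)
    (hInorm : ‖I‖ = 1)
    (S : Finset (Fin n)) (hS : S.card = k)
    (d η α : ℝ) (hd : 0 < d) (hη : 0 < η) (hα : 1 < α)
    (hreg : ∑ i ∈ S, ∑ j ∈ S, A i j = (k : ℝ) * d)
    (hsdp : (1 - η) * ((k : ℝ) * d) ≤ ∑ i ∈ S, ∑ j ∈ S, A i j * ⟪X i, X j⟫)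
    (T : Finset (Fin n)) (hT : T = Finset.univ.filter (fun i => 1 - α * η ≤ ‖X i‖ ^ 2)) :
    ((k : ℝ) * d / 2) * (1 - 1 / α) ≤ (1 / 2) * ∑ i ∈ T ∩ S, ∑ j ∈ T ∩ S, A i j ∧
      (1 / 2) * ∑ i ∈ T ∩ S, ∑ j ∈ T ∩ S, A i j ≤ (1 / 2) * ∑ i ∈ T, ∑ j ∈ T, A i j := by
  have key : ∀ i j, A i j * ⟪X i, X j⟫ ≤ (1 - α * η) * A i j
      + α * η * (if i ∈ T then (if j ∈ T then A i j else 0) else 0) := by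
    intro i j
    have hA := hAnn i j
    have h1 := hle1 i j
    have h2 := hle2 i j
    have h3 := hnorm1 i
    by_cases hi : i ∈ T
    · by_cases hj : j ∈ T
      · rw [if_pos hi, if_pos hj]
        nlinarith [mul_le_mul_of_nonneg_left (h1.trans h3) hA]
      · rw [if_pos hi, if_neg hj]
        have hj' : ‖X j‖ ^ 2 < 1 - α * η := by
          simpa only [hT, Finset.mem_filter, Finset.mem_univ, true_and, not_le] using hj
        nlinarith [mul_le_mul_of_nonneg_left (h2.trans hj'.le) hA]
    · rw [if_neg hi]
      have hi' : ‖X i‖ ^ 2 < 1 - α * η := by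
        simpa only [hT, Finset.mem_filter, Finset.mem_univ, true_and, not_le] using hi
      nlinarith [mul_le_mul_of_nonneg_left (h1.trans hi'.le) hA]
  have hR : ∑ i ∈ S, ∑ j ∈ S, (if i ∈ T then (if j ∈ T then A i j else 0) else 0)
      = ∑ i ∈ T ∩ S, ∑ j ∈ T ∩ S, A i j := by
    rw [Finset.inter_comm, ← Finset.filter_mem_eq_inter, Finset.sum_filter]
    refine Finset.sum_congr rfl fun i _ => ?_
    by_cases hi : i ∈ T
    · simp only [if_pos hi, Finset.sum_filter]
    · simp only [if_neg hi, Finset.sum_const_zero]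
  have hs := Finset.sum_le_sum fun i (_ : i ∈ S) =>
    Finset.sum_le_sum fun j (_ : j ∈ S) => key i j
  simp only [Finset.sum_add_distrib, ← Finset.mul_sum] at hs
  rw [hR, hreg] at hs
  have hα0 : 0 < α := by linarith
  constructor
  · set R := ∑ i ∈ T ∩ S, ∑ j ∈ T ∩ S, A i j
    have h := hsdp.trans hs
    have h4 : (α - 1) * (k * d) ≤ α * R := by
      refine le_of_mul_le_mul_left ?_ hη
      nlinarith
    have h5 : (k : ℝ) * d / 2 * (1 - 1 / α) = ((α - 1) * (k * d)) / α / 2 := by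
      field_simp
    have h6 : ((α - 1) * (k * d)) / α ≤ R := by
      rw [div_le_iff₀ hα0]
      linarith
    rw [h5]
    linarith
  · refine mul_le_mul_of_nonneg_left ?_ (by norm_num)
    calc ∑ i ∈ T ∩ S, ∑ j ∈ T ∩ S, A i j ≤ ∑ i ∈ T ∩ S, ∑ j ∈ T, A i j :=
          Finset.sum_le_sum fun i _ => Finset.sum_le_sum_of_subset_of_nonneg
            Finset.inter_subset_left fun j _ _ => hAnn i j
      _ ≤ _ := Finset.sum_le_sum_of_subset_of_nonneg Finset.inter_subset_left
            fun i _ _ => Finset.sum_nonneg fun j _ => hAnn i j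
end

section
/- Let V'' be a finite set with |V''| ≥ 2, let w be a symmetric nonnegative weight function on pairs of elements of V'' with w(i,i) = 0 for all i, and define ρ(W) := (1/2) Σ_{i,j∈W} w(i,j) for W ⊆ V''. Then for every integer m with 1 ≤ m ≤ |V''| there exists a subset V' ⊆ V'' with |V'| = m such that ρ(V') ≥ (m(m − 1))/(|V''|(|V''| − 1)) · ρ(V''). -/
open RealInnerProductSpace Finset

theorem stmt_11_aux {ι : Type*} [DecidableEq ι] (V : Finset ι)
    (w : ι → ι → ℝ)
    (hsymm : ∀ i j, w i j = w j i)
    (hdiag : ∀ i, w i i = 0) (k : ℕ) : ∀ μ : ℕ, 1 ≤ μ → μ + k = V.card →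
    ∃ V' ⊆ V, V'.card = μ ∧
      ((μ : ℝ) * ((μ : ℝ) - 1)) * (∑ i ∈ V, ∑ j ∈ V, w i j) ≤
        ((V.card : ℝ) * ((V.card : ℝ) - 1)) * ∑ i ∈ V', ∑ j ∈ V', w i j := by
  induction k with
  | zero =>
    intro μ _ h
    refine ⟨V, Finset.Subset.refl _, by omega, ?_⟩
    have : μ = V.card := by omega
    rw [this]
  | succ k ih =>
    intro μ h1 h
    obtain ⟨U, hU, hc, hle⟩ := ih (μ + 1) (by omega) (by omega)
    have hne : U.Nonempty := Finset.card_pos.mp (by omega)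
    obtain ⟨v, hv, hmin⟩ := Finset.exists_min_image U (fun i => ∑ j ∈ U, w i j) hne
    have hd := Finset.card_nsmul_le_sum U (fun i => ∑ j ∈ U, w i j) _ hmin
    rw [hc, nsmul_eq_mul] at hd
    refine ⟨U.erase v, (Finset.erase_subset _ _).trans hU, by
      rw [Finset.card_erase_of_mem hv]; omega, ?_⟩
    have e1 : ∀ i, ∑ j ∈ U.erase v, w i j = ∑ j ∈ U, w i j - w i v := fun i => by
      rw [← Finset.add_sum_erase U _ hv]; ring
    have e2 : ∑ i ∈ U.erase v, ∑ j ∈ U.erase v, w i j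
        = ∑ i ∈ U, ∑ j ∈ U, w i j - 2 * ∑ j ∈ U, w v j := by
      simp only [e1, Finset.sum_sub_distrib]
      have a := Finset.add_sum_erase U (fun i => ∑ j ∈ U, w i j) hv
      have b := Finset.add_sum_erase U (fun i => w i v) hv
      have c : ∑ i ∈ U, w i v = ∑ j ∈ U, w v j :=
        Finset.sum_congr rfl fun i _ => hsymm i v
      have d := hdiag v
      linarith
    rw [e2]
    have hm : (1 : ℝ) ≤ μ := by exact_mod_cast h1
    have hn : (1 : ℝ) ≤ V.card := by exact_mod_cast (by omega : 1 ≤ V.card)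
    push_cast at hd hle
    generalize (∑ i ∈ U, ∑ j ∈ U, w i j) = S at *
    generalize (∑ j ∈ U, w v j) = D at *
    have hN : (0 : ℝ) ≤ (V.card : ℝ) * ((V.card : ℝ) - 1) :=
      mul_nonneg (by linarith) (by linarith)
    generalize (V.card : ℝ) * ((V.card : ℝ) - 1) = N at *
    generalize (∑ i ∈ V, ∑ j ∈ V, w i j) = T at *
    generalize (μ : ℝ) = m at *
    have h2 := mul_le_mul_of_nonneg_left hle (by linarith : 0 ≤ m - 1)
    have h3 := mul_le_mul_of_nonneg_left hd hN
    refine le_of_mul_le_mul_left ?_ (by linarith : 0 < m + 1)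
    nlinarith

theorem stmt_11 {ι : Type*} [DecidableEq ι] (V'' : Finset ι)
    (w : ι → ι → ℝ)
    (hsymm : ∀ i j, w i j = w j i)
    (hnn : ∀ i j, 0 ≤ w i j)
    (hdiag : ∀ i, w i i = 0)
    (hcard : 2 ≤ V''.card)
    (μ : ℕ) (hm1 : 1 ≤ μ) (hm2 : μ ≤ V''.card) :
    ∃ V' ⊆ V'', V'.card = μ ∧
      ((μ : ℝ) * ((μ : ℝ) - 1)) / ((V''.card : ℝ) * ((V''.card : ℝ) - 1)) *
        ((1 / 2) * ∑ i ∈ V'', ∑ j ∈ V'', w i j) ≤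
          (1 / 2) * ∑ i ∈ V', ∑ j ∈ V', w i j := by
  obtain ⟨U, hU, hc, hle⟩ :=
    stmt_11_aux V'' w hsymm hdiag (V''.card - μ) μ hm1 (by omega)
  refine ⟨U, hU, hc, ?_⟩
  have hn : (2 : ℝ) ≤ V''.card := by exact_mod_cast hcard
  have hN : (0 : ℝ) < (V''.card : ℝ) * ((V''.card : ℝ) - 1) :=
    mul_pos (by linarith) (by linarith)
  rw [div_mul_eq_mul_div, div_le_iff₀ hN]
  linarith
end

section
/- Let n, k, d, δ, ξ, λ, d' > 0 be reals with k < n, set p := δd/k, and suppose c := 1 − λ/d − d'k/((n − k)d) − 6δ > 0. Let μ ∈ [0, 1) be a real satisfying kd ≤ kd·μ + 6pk²(1 − μ) + 2ξk√(np)·√(μ(1 − μ)) + (λk + d'k²/(n − k))·(1 − μ). Then μ ≥ 1 − η', where η' := 1/(1 + (dk/(4ξ²δn))·c²). -/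
open RealInnerProductSpace Finset

theorem stmt_13 (n k d δ ξ lam d' : ℝ)
    (hn : 0 < n) (hk : 0 < k) (hd : 0 < d) (hδ : 0 < δ) (hξ : 0 < ξ)
    (hlam : 0 < lam) (hd' : 0 < d') (hkn : k < n)
    (p : ℝ) (hp : p = δ * d / k)
    (c : ℝ) (hc : c = 1 - lam / d - d' * k / ((n - k) * d) - 6 * δ) (hcpos : 0 < c)
    (μ : ℝ) (hμ0 : 0 ≤ μ) (hμ1 : μ < 1)
    (hineq : k * d ≤ k * d * μ + 6 * p * k ^ 2 * (1 - μ)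
      + 2 * ξ * k * Real.sqrt (n * p) * Real.sqrt (μ * (1 - μ))
      + (lam * k + d' * k ^ 2 / (n - k)) * (1 - μ)) :
    1 - 1 / (1 + d * k / (4 * ξ ^ 2 * δ * n) * c ^ 2) ≤ μ := by
  have hnk : 0 < n - k := by linarith
  have h1 : 0 < 1 - μ := by linarith
  have hnp : 0 ≤ n * p := by rw [hp]; positivity
  have hS := Real.sq_sqrt hnp
  have hT := Real.sq_sqrt (mul_nonneg hμ0 h1.le)
  set S := Real.sqrt (n * p)
  set T := Real.sqrt (μ * (1 - μ))
  have e : k * d * c = k * d - (lam * k + d' * k ^ 2 / (n - k)) - 6 * p * k ^ 2 := by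
    rw [hc, hp]; field_simp; ring
  have h2 : k * (d * c * (1 - μ)) ≤ k * (2 * ξ * (S * T)) := by
    have : k * (d * c * (1 - μ)) = (k * d * c) * (1 - μ) := by ring
    rw [this, e]; nlinarith [hineq]
  have h3 : d * c * (1 - μ) ≤ 2 * ξ * (S * T) := le_of_mul_le_mul_left h2 hk
  have h4 : (d * c * (1 - μ)) ^ 2 ≤ (2 * ξ * (S * T)) ^ 2 :=
    pow_le_pow_left₀ (by positivity) h3 2
  have h5 : (2 * ξ * (S * T)) ^ 2 = 4 * ξ ^ 2 * (n * p) * (μ * (1 - μ)) := by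
    rw [← hS, ← hT]; ring
  have hpk : p * k = δ * d := by rw [hp]; field_simp
  have h6 : (d * (1 - μ)) * (d * k * c ^ 2 * (1 - μ))
      ≤ (d * (1 - μ)) * (4 * ξ ^ 2 * δ * n * μ) := by
    have h7 := mul_le_mul_of_nonneg_left (h4.trans_eq h5) hk.le
    have h8 : k * (4 * ξ ^ 2 * (n * p) * (μ * (1 - μ)))
        = 4 * ξ ^ 2 * n * (p * k) * (μ * (1 - μ)) := by ring
    rw [h8, hpk] at h7
    linarith
  have h9 : d * k * c ^ 2 * (1 - μ) ≤ 4 * ξ ^ 2 * δ * n * μ :=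
    le_of_mul_le_mul_left h6 (by positivity)
  have h10 : d * k / (4 * ξ ^ 2 * δ * n) * c ^ 2 * (1 - μ) ≤ μ := by
    have : d * k / (4 * ξ ^ 2 * δ * n) * c ^ 2 * (1 - μ)
        = d * k * c ^ 2 * (1 - μ) / (4 * ξ ^ 2 * δ * n) := by ring
    rw [this, div_le_iff₀ (by positivity)]; linarith
  have hA : 0 < 1 + d * k / (4 * ξ ^ 2 * δ * n) * c ^ 2 := by positivity
  have h11 : 1 - μ ≤ 1 / (1 + d * k / (4 * ξ ^ 2 * δ * n) * c ^ 2) := by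
    rw [le_div_iff₀ hA]; linarith
  linarith
end

section
/- Let {X_i}_{i∈V} together with I be a feasible SDP solution for the Densest k-Subgraph relaxation, where k is a positive integer, let S ⊆ V with |S| = k, and let d > 0, η' > 0 and α > 1 be reals. Suppose the restriction of A to S is d-regular (Σ_{j∈S} A_{ij} = d for every i ∈ S) and (1/k) Σ_{i∈S} ‖X_i‖² ≥ 1 − η'. Define T := {i ∈ V : ‖X_i‖² ≥ 1 − αη'}. Then ρ(T ∩ S) ≥ (kd/2)·(1 − 2/α). -/
open RealInnerProductSpace Finset

theorem stmt_16 {n m : ℕ} (hn : 1 ≤ n) (k : ℕ) (hk : 0 < k)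
    (A : Matrix (Fin n) (Fin n) ℝ) (hAsymm : A.IsSymm) (hAnn : ∀ i j, 0 ≤ A i j)
    (X : Fin n → EuclideanSpace ℝ (Fin m)) (I : EuclideanSpace ℝ (Fin m))
    (hsum : ∑ i, ‖X i‖ ^ 2 = (k : ℝ))
    (hrow : ∀ i, ∑ j, ⟪X i, X j⟫ ≤ (k : ℝ) * ‖X i‖ ^ 2)
    (hnn : ∀ i j, 0 ≤ ⟪X i, X j⟫)
    (hle1 : ∀ i j, ⟪X i, X j⟫ ≤ ‖X i‖ ^ 2)
    (hle2 : ∀ i j, ⟪X i, X j⟫ ≤ ‖X j‖ ^ 2)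
    (hnorm1 : ∀ i, ‖X i‖ ^ 2 ≤ 1)
    (hXI : ∀ i, ⟪X i, I⟫ = ‖X i‖ ^ 2)
    (hInorm : ‖I‖ = 1)
    (S : Finset (Fin n)) (hS : S.card = k)
    (d η' α : ℝ) (hd : 0 < d) (hη' : 0 < η') (hα : 1 < α)
    (hreg : ∀ i ∈ S, ∑ j ∈ S, A i j = d)
    (havg : 1 - η' ≤ (1 / (k : ℝ)) * ∑ i ∈ S, ‖X i‖ ^ 2)
    (T : Finset (Fin n)) (hT : T = Finset.univ.filter (fun i => 1 - α * η' ≤ ‖X i‖ ^ 2)) :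
    ((k : ℝ) * d / 2) * (1 - 2 / α) ≤ (1 / 2) * ∑ i ∈ T ∩ S, ∑ j ∈ T ∩ S, A i j := by
  have hk' : (0:ℝ) < k := by exact_mod_cast hk
  have hPS : T ∩ S ⊆ S := Finset.inter_subset_right
  set P := T ∩ S with hP
  set Q := S \ P with hQ
  have hcard : (Q.card : ℝ) + P.card = k := by
    rw [← hS, ← Finset.card_sdiff_add_card_eq_card hPS]; push_cast; rfl
  have havg' : (k : ℝ) * (1 - η') ≤ ∑ i ∈ S, ‖X i‖ ^ 2 := by
    have h := mul_le_mul_of_nonneg_left havg hk'.le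
    rwa [← mul_assoc, mul_one_div_cancel hk'.ne', one_mul] at h
  have hsplit := Finset.sum_sdiff (f := fun i => ‖X i‖ ^ 2) hPS
  have h1 : ∑ i ∈ P, ‖X i‖ ^ 2 ≤ P.card := by
    simpa using Finset.sum_le_card_nsmul P (fun i => ‖X i‖ ^ 2) 1 (fun i _ => hnorm1 i)
  have h2 : ∑ i ∈ Q, ‖X i‖ ^ 2 ≤ Q.card * (1 - α * η') := by
    have := Finset.sum_le_card_nsmul Q (fun i => ‖X i‖ ^ 2) (1 - α * η') (fun i hi => by
      rw [hQ, Finset.mem_sdiff, hP, Finset.mem_inter, hT, Finset.mem_filter] at hi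
      by_contra hc
      exact hi.2 ⟨⟨Finset.mem_univ _, (not_le.mp hc).le⟩, hi.1⟩)
    simpa [nsmul_eq_mul] using this
  have hq : (Q.card : ℝ) * α ≤ k := by
    have : ((Q.card : ℝ) * α) * η' ≤ k * η' := by
      have h3 : ∑ i ∈ Q, ‖X i‖ ^ 2 + ∑ i ∈ P, ‖X i‖ ^ 2 = ∑ i ∈ S, ‖X i‖ ^ 2 := hsplit
      linarith
    exact le_of_mul_le_mul_right this hη'
  have hq' : (Q.card : ℝ) ≤ k / α := (le_div_iff₀ (by linarith)).2 hq
  have hrowP : ∑ i ∈ P, (∑ j ∈ Q, A i j + ∑ j ∈ P, A i j) = P.card * d := by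
    rw [Finset.sum_congr rfl (fun i hi => (Finset.sum_sdiff hPS).trans (hreg i (hPS hi)))]
    simp
  rw [Finset.sum_add_distrib] at hrowP
  have hPQ : ∑ i ∈ P, ∑ j ∈ Q, A i j ≤ Q.card * d := by
    have hc : ∑ i ∈ P, ∑ j ∈ Q, A i j = ∑ j ∈ Q, ∑ i ∈ P, A i j :=
      Finset.sum_comm (f := fun i j => A i j)
    refine hc.trans_le ?_
    have := Finset.sum_le_card_nsmul Q (fun j => ∑ i ∈ P, A i j) d (fun j hj => by
      rw [← hreg j (Finset.sdiff_subset hj)]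
      refine (Finset.sum_congr rfl (fun i _ => hAsymm.apply j i)).trans_le ?_
      exact Finset.sum_le_sum_of_subset_of_nonneg hPS (fun i _ _ => hAnn j i))
    simpa [nsmul_eq_mul] using this
  have hfin := mul_le_mul_of_nonneg_right hq' hd.le
  have hPc : (P.card : ℝ) = k - Q.card := by linarith
  rw [hPc] at hrowP
  have e : ((k : ℝ) * d / 2) * (1 - 2 / α) = k * d / 2 - k / α * d := by ring
  rw [e]
  linarith
end

section
/- Let {X_i}_{i∈V} together with I be a feasible SDP solution for the Densest k-Subgraph relaxation, where k is a positive integer, let S ⊆ V with |S| = k, and let γ, d > 0 be reals. Suppose that for every nonempty subset W ⊆ V∖S one has ρ(W) ≤ γd·|W|. Then Σ_{i∈V∖S} Σ_{j∈V∖S} A_{ij} ⟨X_i, X_j⟩ ≤ 2γdk·(1 − (1/k) Σ_{i∈S} ‖X_i‖²). -/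
open RealInnerProductSpace Finset

/-- Layer-cake bound: a density bound on all subsets bounds the `min`-weighted sum. -/
theorem min_sum_bound {ι : Type*} [DecidableEq ι] (A : ι → ι → ℝ) (c : ℝ) :
    ∀ (N : ℕ) (T : Finset ι) (y : ι → ℝ), T.card = N → (∀ i ∈ T, 0 ≤ y i) →
      (∀ W ⊆ T, W.Nonempty → ∑ i ∈ W, ∑ j ∈ W, A i j ≤ c * (W.card : ℝ)) →
      ∑ i ∈ T, ∑ j ∈ T, A i j * min (y i) (y j) ≤ c * ∑ i ∈ T, y i := by
  intro N
  induction N with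
  | zero =>
    intro T y hT _ _
    rw [Finset.card_eq_zero] at hT
    simp [hT]
  | succ N ih =>
    intro T y hT hy hW
    have hne : T.Nonempty := Finset.card_pos.mp (by omega)
    obtain ⟨p, hp, hmin⟩ := Finset.exists_min_image T y hne
    have h1 := ih (T.erase p) (fun i => y i - y p)
      (by rw [Finset.card_erase_of_mem hp]; omega)
      (fun i hi => sub_nonneg.mpr (hmin i (Finset.mem_of_mem_erase hi)))
      (fun W hWT hWn => hW W (hWT.trans (Finset.erase_subset _ _)) hWn)
    have h2 : ∑ i ∈ T.erase p, (y i - y p) = ∑ i ∈ T, (y i - y p) :=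
      Finset.sum_erase _ (by simp)
    have h3 : ∑ i ∈ T.erase p, ∑ j ∈ T.erase p, A i j * min (y i - y p) (y j - y p)
        = ∑ i ∈ T, ∑ j ∈ T, A i j * min (y i - y p) (y j - y p) := by
      rw [← Finset.sum_erase T (a := p)]
      · refine Finset.sum_congr rfl fun i hi => Finset.sum_erase _ ?_
        have := hmin i (Finset.mem_of_mem_erase hi)
        rw [sub_self, min_eq_right (by linarith), mul_zero]
      · refine Finset.sum_eq_zero fun j hj => ?_
        have := hmin j hj
        rw [sub_self, min_eq_left (by linarith), mul_zero]
    have h4 : ∑ i ∈ T, ∑ j ∈ T, A i j * min (y i) (y j)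
        = ∑ i ∈ T, ∑ j ∈ T, A i j * min (y i - y p) (y j - y p)
          + (∑ i ∈ T, ∑ j ∈ T, A i j) * y p := by
      simp only [Finset.sum_mul, ← Finset.sum_add_distrib]
      refine Finset.sum_congr rfl fun i _ => Finset.sum_congr rfl fun j _ => ?_
      rw [min_sub_sub_right]; ring
    have h5 := mul_le_mul_of_nonneg_right (hW T subset_rfl hne) (hy p hp)
    rw [h2, h3, Finset.sum_sub_distrib, Finset.sum_const, nsmul_eq_mul] at h1
    rw [h4]
    linarith

theorem stmt_18 {n m : ℕ} (hn : 1 ≤ n) (k : ℕ) (hk : 0 < k)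
    (A : Matrix (Fin n) (Fin n) ℝ) (hAsymm : A.IsSymm) (hAnn : ∀ i j, 0 ≤ A i j)
    (X : Fin n → EuclideanSpace ℝ (Fin m)) (I : EuclideanSpace ℝ (Fin m))
    (hsum : ∑ i, ‖X i‖ ^ 2 = (k : ℝ))
    (hrow : ∀ i, ∑ j, ⟪X i, X j⟫ ≤ (k : ℝ) * ‖X i‖ ^ 2)
    (hnn : ∀ i j, 0 ≤ ⟪X i, X j⟫)
    (hle1 : ∀ i j, ⟪X i, X j⟫ ≤ ‖X i‖ ^ 2)
    (hle2 : ∀ i j, ⟪X i, X j⟫ ≤ ‖X j‖ ^ 2)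
    (hnorm1 : ∀ i, ‖X i‖ ^ 2 ≤ 1)
    (hXI : ∀ i, ⟪X i, I⟫ = ‖X i‖ ^ 2)
    (hInorm : ‖I‖ = 1)
    (S : Finset (Fin n)) (hS : S.card = k)
    (γ d : ℝ) (hγ : 0 < γ) (hd : 0 < d)
    (hdense : ∀ W ⊆ Sᶜ, W.Nonempty →
      (1 / 2) * ∑ i ∈ W, ∑ j ∈ W, A i j ≤ γ * d * (W.card : ℝ)) :
    ∑ i ∈ Sᶜ, ∑ j ∈ Sᶜ, A i j * ⟪X i, X j⟫ ≤
      2 * γ * d * (k : ℝ) * (1 - (1 / (k : ℝ)) * ∑ i ∈ S, ‖X i‖ ^ 2) := by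
  have h1 := min_sum_bound A (2 * (γ * d)) _ Sᶜ (fun i => ‖X i‖ ^ 2) rfl
    (fun i _ => sq_nonneg _)
    (fun W hW hn => by have := hdense W hW hn; linarith)
  have h2 : ∑ i ∈ Sᶜ, ∑ j ∈ Sᶜ, A i j * ⟪X i, X j⟫ ≤
      ∑ i ∈ Sᶜ, ∑ j ∈ Sᶜ, A i j * min (‖X i‖ ^ 2) (‖X j‖ ^ 2) :=
    Finset.sum_le_sum fun i _ => Finset.sum_le_sum fun j _ =>
      mul_le_mul_of_nonneg_left (le_min (hle1 i j) (hle2 i j)) (hAnn i j)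
  have h3 := Finset.sum_add_sum_compl S (fun i => ‖X i‖ ^ 2)
  rw [hsum] at h3
  have hk' : (k : ℝ) ≠ 0 := by positivity
  have h4 : 2 * γ * d * (k : ℝ) * (1 - (1 / (k : ℝ)) * ∑ i ∈ S, ‖X i‖ ^ 2)
      = 2 * (γ * d) * ((k : ℝ) - ∑ i ∈ S, ‖X i‖ ^ 2) := by
    field_simp
  have h5 : (k : ℝ) - ∑ i ∈ S, ‖X i‖ ^ 2 = ∑ i ∈ Sᶜ, ‖X i‖ ^ 2 := by linarith
  rw [h4, h5]
  exact h2.trans h1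
end
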